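/- Let A = ℂ[x, y, z] with the exact Poisson bracket {-,-}_f for some f ∈ A, let (α, β, γ) ∈ ℂ³, let J = (x − α, y − β, z − γ) and let λ = f(α, β, γ). Then the following are equivalent: (1) J is a Poisson ideal of A; (2) ∂f/∂x ∈ J, ∂f/∂y ∈ J and ∂f/∂z ∈ J; (3) f − λ ∈ J². -/

import Mathlib

open MvPolynomial in
/-- The exact Poisson bracket `{-,-}_f` on `ℂ[x, y, z]` determined by `f`:
`{g,h}_f = f_x (g_y h_z - g_z h_y) + f_y (g_z h_x - g_x h_z) + f_z (g_x h_y - g_y h_x)`. -/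
noncomputable def exactBr (f : MvPolynomial (Fin 3) ℂ) :
    MvPolynomial (Fin 3) ℂ → MvPolynomial (Fin 3) ℂ → MvPolynomial (Fin 3) ℂ :=
  fun g h =>
    pderiv 0 f * (pderiv 1 g * pderiv 2 h - pderiv 2 g * pderiv 1 h)
    + pderiv 1 f * (pderiv 2 g * pderiv 0 h - pderiv 0 g * pderiv 2 h)
    + pderiv 2 f * (pderiv 0 g * pderiv 1 h - pderiv 1 g * pderiv 0 h)

namespace MvPolynomial

variable {σ R : Type*} [CommRing R]

theorem pderiv_sub_C (i : σ) (g : MvPolynomial σ R) (a : R) :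
    pderiv i (g - C a) = pderiv i g := by
  simp

theorem sub_C_eval_mem_span (p : σ → R) (f : MvPolynomial σ R) :
    f - C (eval p f) ∈ Ideal.span (Set.range fun i => X i - C (p i)) := by
  induction f using MvPolynomial.induction_on with
  | C a => simp
  | add f g hf hg =>
    convert add_mem hf hg using 1
    simp only [map_add]
    ring
  | mul_X f i hf =>
    have hX : X i - C (p i) ∈ Ideal.span (Set.range fun i => X i - C (p i)) :=
      Ideal.subset_span ⟨i, rfl⟩
    convert add_mem (Ideal.mul_mem_right (X i) _ hf)
      (Ideal.mul_mem_left _ (C (eval p f)) hX) using 1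
    simp only [map_mul, eval_X]
    ring

theorem mem_span_X_sub_C_iff (p : σ → R) (f : MvPolynomial σ R) :
    f ∈ Ideal.span (Set.range fun i => X i - C (p i)) ↔ eval p f = 0 := by
  constructor
  · intro hf
    have hle : Ideal.span (Set.range fun i => X i - C (p i)) ≤ RingHom.ker (eval p) := by
      rw [Ideal.span_le]
      rintro _ ⟨i, rfl⟩
      simp [RingHom.mem_ker]
    exact hle hf
  · intro hf
    simpa [hf] using sub_C_eval_mem_span p f

theorem eval_pderiv_sum_mul_X_sub_C [Fintype σ] (p : σ → R) (c : σ → MvPolynomial σ R) (j : σ) :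
    eval p (pderiv j (∑ i, c i * (X i - C (p i)))) = eval p (c j) := by
  classical
  simp [pderiv_X, Pi.single_apply, apply_ite (eval p)]

/-- All partial derivatives of `f` vanish at `p` exactly when `f` agrees with its value at `p`
to first order. -/
theorem forall_pderiv_mem_iff_sub_C_eval_mem_sq [Fintype σ] (p : σ → R) (f : MvPolynomial σ R) :
    (∀ i, pderiv i f ∈ Ideal.span (Set.range fun i => X i - C (p i))) ↔
      f - C (eval p f) ∈ Ideal.span (Set.range fun i => X i - C (p i)) ^ 2 := by
  constructor
  · intro h
    obtain ⟨c, hc⟩ := Ideal.mem_span_range_iff_exists_fun.1 (sub_C_eval_mem_span p f)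
    rw [← hc, pow_two]
    refine Ideal.sum_mem _ fun i _ => Ideal.mul_mem_mul ?_ (Ideal.subset_span ⟨i, rfl⟩)
    rw [mem_span_X_sub_C_iff, ← eval_pderiv_sum_mul_X_sub_C, hc]
    simpa using (mem_span_X_sub_C_iff p _).1 (h i)
  · intro h i
    have hD : pderiv i (f - C (eval p f)) ∈ Ideal.span (Set.range fun i => X i - C (p i)) := by
      rw [pow_two] at h
      refine Submodule.mul_induction_on h (fun a ha b hb => ?_) fun a b ha hb => ?_
      · rw [Derivation.leibniz]
        exact add_mem (Ideal.mul_mem_right _ _ ha) (Ideal.mul_mem_right _ _ hb)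
      · rw [map_add]
        exact add_mem ha hb
    simpa only [pderiv_sub_C] using hD

end MvPolynomial

open MvPolynomial in
theorem exactBr_sub_C (f g k : MvPolynomial (Fin 3) ℂ) (c : ℂ) :
    exactBr f g (k - C c) = exactBr f g k := by
  have hk (i : Fin 3) : pderiv i (k - C c) = pderiv i k := pderiv_sub_C i k c
  simp only [exactBr, hk]

open MvPolynomial in
theorem exactBr_mem_of_pderiv_mem {f : MvPolynomial (Fin 3) ℂ} {J : Ideal (MvPolynomial (Fin 3) ℂ)}
    (h : ∀ i, pderiv i f ∈ J) (g k : MvPolynomial (Fin 3) ℂ) : exactBr f g k ∈ J :=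
  add_mem (add_mem (Ideal.mul_mem_right _ _ (h 0)) (Ideal.mul_mem_right _ _ (h 1)))
    (Ideal.mul_mem_right _ _ (h 2))

open MvPolynomial in
/-- Let `A = ℂ[x,y,z]` with the exact bracket `{-,-}_f`, let
`J = (x − α, y − β, z − γ)` and `λ = f(α, β, γ)`.  The following are equivalent:
(1) `J` is a Poisson ideal; (2) the three partial derivatives of `f` lie in `J`;
(3) `f − λ ∈ J²`. -/
theorem stmt14 (f : MvPolynomial (Fin 3) ℂ) (α β γ : ℂ) :
    let J : Ideal (MvPolynomial (Fin 3) ℂ) :=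
      Ideal.span {X 0 - C α, X 1 - C β, X 2 - C γ}
    let lam : ℂ := eval ![α, β, γ] f
    ((∀ a : MvPolynomial (Fin 3) ℂ, ∀ i ∈ J, exactBr f a i ∈ J) ↔
      (pderiv 0 f ∈ J ∧ pderiv 1 f ∈ J ∧ pderiv 2 f ∈ J)) ∧
    ((pderiv 0 f ∈ J ∧ pderiv 1 f ∈ J ∧ pderiv 2 f ∈ J) ↔
      f - C lam ∈ J ^ 2) := by
  intro J lam
  have hJ : J = Ideal.span (Set.range fun i => X i - C (![α, β, γ] i)) := by
    refine congrArg Ideal.span (Set.ext fun q => ?_)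
    simp [Fin.exists_fin_succ, eq_comm]
  have hall : (pderiv 0 f ∈ J ∧ pderiv 1 f ∈ J ∧ pderiv 2 f ∈ J) ↔ ∀ i, pderiv i f ∈ J := by
    simp [Fin.forall_fin_succ]
  refine ⟨⟨fun h => ⟨?_, ?_, ?_⟩, fun h a i _ => exactBr_mem_of_pderiv_mem (hall.1 h) a i⟩, ?_⟩
  · have hbr := h (X 1) (X 2 - C γ) (Ideal.subset_span (by simp))
    rw [exactBr_sub_C] at hbr
    simpa [exactBr, pderiv_X] using hbr
  · have hbr := h (X 2) (X 0 - C α) (Ideal.subset_span (by simp))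
    rw [exactBr_sub_C] at hbr
    simpa [exactBr, pderiv_X] using hbr
  · have hbr := h (X 0) (X 1 - C β) (Ideal.subset_span (by simp))
    rw [exactBr_sub_C] at hbr
    simpa [exactBr, pderiv_X] using hbr
  · rw [hall, hJ]
    exact forall_pderiv_mem_iff_sub_C_eval_mem_sq ![α, β, γ] f
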